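/- Let U and V be finite-dimensional vector spaces over a field K and S a linear subspace of L(U,V). Assume that dim S⊥y ≤ 1 for every y ∈ V, where S⊥y = {t(y) : t ∈ S⊥}, and that codim S > 1. Then there exist a nonzero vector x ∈ U and a linear subspace R of V such that S = {s ∈ L(U,V) : s(x) ∈ R}. -/

import Mathlib

/-- The orthogonal `S⊥` of a subspace `S ⊆ L(U,V)` with respect to the trace bilinear
form `(s, t) ↦ tr (t ∘ s)`: the space of all `t : V →ₗ[K] U` with `tr (t ∘ s) = 0` for
every `s ∈ S`. -/
def tracePerp {K U V : Type*} [Field K] [AddCommGroup U] [Module K U]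
    [AddCommGroup V] [Module K V] (S : Submodule K (U →ₗ[K] V)) :
    Submodule K (V →ₗ[K] U) where
  carrier := {t | ∀ s ∈ S, LinearMap.trace K U (t ∘ₗ s) = 0}
  add_mem' := fun {a b} ha hb s hs => by
    simp only [LinearMap.add_comp, map_add, ha s hs, hb s hs, add_zero]
  zero_mem' := fun s hs => by simp
  smul_mem' := fun c t ht s hs => by
    simp only [LinearMap.smul_comp, map_smul, ht s hs, smul_zero]

/-!
Write `T = S⊥`. Every linear form on `L(U,V)` is `s ↦ tr (t ∘ s)` for some `t`, so `S = T⊥` and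
`codim S > 1` forces `dim T > 1`. If `t, h ∈ T`, `h y = 0` and `h z ≠ 0`, then evaluating at `z`
and at `y + z` puts both `t z` and `t y + t z` on the line through `h z`, hence also `t y`.
Since `dim T > 1`, there are `t ∈ T` and `y` with `t y ≠ 0`, and a nonzero `h ∈ T` with `h y = 0`;
it follows that `h`, and then every element of `T`, takes its values in the line through `x = t y`.
For such an operator `tr (t ∘ s) • x = t (s x)`, so `S` consists of the `s` whose value at `x` is
killed by all of `T`.
-/

open Module Submodule

section Line

variable {K M : Type*} [DivisionRing K] [AddCommGroup M] [Module K M]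

theorem mem_span_singleton_swap {x y : M} (hx : x ≠ 0) (hxy : x ∈ span K {y}) :
    y ∈ span K {x} := by
  simpa using mem_span_insert_exchange (K := K) (s := ∅) (by simpa using hxy) (by simpa using hx)

theorem mem_span_singleton_of_rank_le_one {p : Submodule K M} (hp : Module.rank K p ≤ 1)
    {x y : M} (hx : x ∈ p) (hx0 : x ≠ 0) (hy : y ∈ p) : y ∈ span K {x} := by
  obtain ⟨v, hv⟩ := (rank_submodule_le_one_iff' p).1 hp
  exact mem_span_singleton_trans (hv hy) (mem_span_singleton_swap hx0 (hv hx))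

end Line

theorem rank_quotient_le_one_of_ker_le {R M : Type*} [CommRing R] [Nontrivial R]
    [AddCommGroup M] [Module R M] {p : Submodule R M} (φ : Dual R M)
    (h : LinearMap.ker φ ≤ p) : Module.rank R (M ⧸ p) ≤ 1 := by
  have injective : Function.Injective ((LinearMap.ker φ).liftQ φ le_rfl) :=
    LinearMap.ker_eq_bot.1 (ker_liftQ_eq_bot' _ _ rfl)
  have rank_quotient_ker : Module.rank R (M ⧸ LinearMap.ker φ) ≤ 1 := by
    simpa using LinearMap.lift_rank_le_of_injective _ injective
  exact (LinearMap.rank_le_of_surjective _ (factor_surjective h)).trans rank_quotient_ker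

section TraceForm

theorem exists_forall_trace_comp_eq {R U V : Type*} [CommRing R] [AddCommGroup U] [Module R U]
    [Module.Free R U] [Module.Finite R U] [AddCommGroup V] [Module R V]
    (φ : Dual R (U →ₗ[R] V)) :
    ∃ t : V →ₗ[R] U, ∀ s, LinearMap.trace R U (t ∘ₗ s) = φ s := by
  let t : V →ₗ[R] U := (evalEquiv R U).symm ∘ₗ
    (TensorProduct.curry (φ ∘ₗ dualTensorHom R U V)).flip
  have dualTensorHom_tmul (f : Dual R U) (v : V) :
      dualTensorHom R U V (f ⊗ₜ v) = f.smulRight v := by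
    ext
    simp
  have dual_apply (f : Dual R U) (v : V) : f (t v) = φ (f.smulRight v) := by
    simp [t, dualTensorHom_tmul]
  have comp_smulRight (f : Dual R U) (v : V) : t ∘ₗ f.smulRight v = f.smulRight (t v) := by
    ext
    simp
  refine ⟨t, fun s ↦ ?_⟩
  obtain ⟨z, rfl⟩ := dualTensorHom_bijective.surjective s
  induction z with
  | zero => simp
  | add a b ha hb => simp only [map_add, LinearMap.comp_add, ha, hb]
  | tmul f v =>
    rw [dualTensorHom_tmul, comp_smulRight, LinearMap.trace_smulRight, dual_apply]

variable {K U V : Type*} [Field K] [AddCommGroup U] [Module K U] [FiniteDimensional K U]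
  [AddCommGroup V] [Module K V]

theorem trace_smul_eq_apply_of_range_le_span_singleton {f : U →ₗ[K] U} {x : U}
    (hf : LinearMap.range f ≤ span K {x}) : LinearMap.trace K U f • x = f x := by
  obtain rfl | hx := eq_or_ne x 0
  · simp
  obtain ⟨g, hg⟩ := Projective.exists_dual_eq_one K hx
  have eq_smulRight : f = (g ∘ₗ f).smulRight x := by
    ext u
    obtain ⟨c, hc⟩ := mem_span_singleton.1 (hf ⟨u, rfl⟩)
    simp [← hc, hg]
  conv_lhs => rw [eq_smulRight, LinearMap.trace_smulRight]
  exact (LinearMap.congr_fun eq_smulRight x).symm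

theorem mem_iff_forall_mem_tracePerp {S : Submodule K (U →ₗ[K] V)} {s : U →ₗ[K] V} :
    s ∈ S ↔ ∀ t ∈ tracePerp S, LinearMap.trace K U (t ∘ₗ s) = 0 := by
  refine ⟨fun hs t ht ↦ ht s hs, fun h ↦ ?_⟩
  by_contra hs
  obtain ⟨φ, hφs, hφS⟩ := exists_le_ker_of_notMem hs
  obtain ⟨t, ht⟩ := exists_forall_trace_comp_eq φ
  exact hφs (ht s ▸ h t fun s' hs' ↦ (ht s').trans (hφS hs'))

theorem one_lt_rank_tracePerp {S : Submodule K (U →ₗ[K] V)}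
    (hS : 1 < Module.rank K ((U →ₗ[K] V) ⧸ S)) : 1 < Module.rank K (tracePerp S) := by
  contrapose! hS
  obtain ⟨t, ht⟩ := (rank_submodule_le_one_iff' _).1 hS
  refine rank_quotient_le_one_of_ker_le (LinearMap.trace K U ∘ₗ t.compRight K) fun s hs ↦ ?_
  refine mem_iff_forall_mem_tracePerp.2 fun t' ht' ↦ ?_
  obtain ⟨c, rfl⟩ := mem_span_singleton.1 (ht ht')
  have trace_eq_zero : LinearMap.trace K U (t ∘ₗ s) = 0 := hs
  rw [LinearMap.smul_comp, map_smul, trace_eq_zero, smul_zero]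

theorem eq_comap_iInf_ker_of_range_le_span_singleton {S : Submodule K (U →ₗ[K] V)} {x : U}
    (hx : x ≠ 0) (hS : ∀ t ∈ tracePerp S, LinearMap.range t ≤ span K {x}) :
    S = (⨅ t ∈ tracePerp S, LinearMap.ker t).comap (LinearMap.applyₗ x) := by
  have trace_eq_zero_iff (t) (ht : t ∈ tracePerp S) (s : U →ₗ[K] V) :
      LinearMap.trace K U (t ∘ₗ s) = 0 ↔ t (s x) = 0 := by
    rw [← smul_eq_zero_iff_left hx, trace_smul_eq_apply_of_range_le_span_singleton
      ((LinearMap.range_comp_le_range s t).trans (hS t ht)), LinearMap.comp_apply]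
  ext s
  simp only [mem_iff_forall_mem_tracePerp (S := S) (s := s), mem_comap, mem_iInf,
    LinearMap.mem_ker, LinearMap.applyₗ_apply_apply]
  exact forall₂_congr fun t ht ↦ trace_eq_zero_iff t ht s

end TraceForm

section Evaluations

variable {K U V : Type*} [Field K] [AddCommGroup U] [Module K U] [AddCommGroup V] [Module K V]
  {T : Submodule K (V →ₗ[K] U)}

theorem apply_mem_span_singleton_apply {y : V}
    (hT : Module.rank K (T.map (LinearMap.applyₗ y)) ≤ 1) {t h : V →ₗ[K] U}
    (ht : t ∈ T) (hh : h ∈ T) (hy : h y ≠ 0) : t y ∈ span K {h y} :=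
  mem_span_singleton_of_rank_le_one hT ⟨h, hh, rfl⟩ hy ⟨t, ht, rfl⟩

theorem apply_mem_span_singleton_apply_of_apply_eq_zero
    (hT : ∀ y, Module.rank K (T.map (LinearMap.applyₗ y)) ≤ 1) {t h : V →ₗ[K] U}
    (ht : t ∈ T) (hh : h ∈ T) {y z : V} (hy : h y = 0) (hz : h z ≠ 0) :
    t y ∈ span K {h z} := by
  have h_add : h (y + z) = h z := by rw [map_add, hy, zero_add]
  have tz_mem : t z ∈ span K {h z} := apply_mem_span_singleton_apply (hT z) ht hh hz
  have t_add_mem : t (y + z) ∈ span K {h z} :=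
    h_add ▸ apply_mem_span_singleton_apply (hT (y + z)) ht hh (h_add ▸ hz)
  rwa [map_add, add_mem_cancel_right tz_mem] at t_add_mem

theorem exists_mem_ne_zero_apply_eq_zero {y : V}
    (hT : Module.rank K (T.map (LinearMap.applyₗ y)) ≤ 1) (hT1 : 1 < Module.rank K T)
    {t : V →ₗ[K] U} (ht : t ∈ T) (hy : t y ≠ 0) : ∃ h ∈ T, h ≠ 0 ∧ h y = 0 := by
  have not_le : ¬T ≤ span K {t} := fun hle ↦
    hT1.not_ge ((rank_submodule_le_one_iff' T).2 ⟨t, hle⟩)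
  obtain ⟨t', ht', t'_notMem⟩ := SetLike.not_le_iff_exists.1 not_le
  obtain ⟨c, hc⟩ := mem_span_singleton.1 (apply_mem_span_singleton_apply hT ht' ht hy)
  refine ⟨t' - c • t, T.sub_mem ht' (T.smul_mem c ht), fun h0 ↦ t'_notMem ?_, by simp [hc]⟩
  exact mem_span_singleton.2 ⟨c, (sub_eq_zero.1 h0).symm⟩

theorem exists_range_le_span_singleton_of_rank_map_apply_le_one
    (hT : ∀ y, Module.rank K (T.map (LinearMap.applyₗ y)) ≤ 1) (hT1 : 1 < Module.rank K T) :
    ∃ x : U, x ≠ 0 ∧ ∀ t ∈ T, LinearMap.range t ≤ span K {x} := by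
  have T_ne_bot : T ≠ ⊥ := by
    rintro rfl
    simp at hT1
  obtain ⟨t₀, ht₀, t₀_ne⟩ := exists_mem_ne_zero_of_ne_bot T_ne_bot
  obtain ⟨y₀, hy₀⟩ := DFunLike.ne_iff.1 t₀_ne
  obtain ⟨h, hh, h_ne, hy₀h⟩ := exists_mem_ne_zero_apply_eq_zero (hT y₀) hT1 ht₀ hy₀
  obtain ⟨z₀, hz₀⟩ := DFunLike.ne_iff.1 h_ne
  have h_mem (z : V) (hz : h z ≠ 0) : h z ∈ span K {t₀ y₀} :=
    mem_span_singleton_swap hy₀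
      (apply_mem_span_singleton_apply_of_apply_eq_zero hT ht₀ hh hy₀h hz)
  refine ⟨t₀ y₀, hy₀, ?_⟩
  rintro t ht _ ⟨y, rfl⟩
  by_cases hy : h y = 0
  · exact mem_span_singleton_trans
      (apply_mem_span_singleton_apply_of_apply_eq_zero hT ht hh hy hz₀) (h_mem z₀ hz₀)
  · exact mem_span_singleton_trans (apply_mem_span_singleton_apply (hT y) ht hh hy) (h_mem y hy)

end Evaluations

theorem subspace_eq_comap_of_small_perp_evaluations_general {K U V : Type*} [Field K]
    [AddCommGroup U] [Module K U] [FiniteDimensional K U] [AddCommGroup V] [Module K V]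
    (S : Submodule K (U →ₗ[K] V))
    (hperp : ∀ y : V, finrank K ((tracePerp S).map (LinearMap.applyₗ y)) ≤ 1)
    (hcodim : 1 < Module.rank K ((U →ₗ[K] V) ⧸ S)) :
    ∃ x : U, x ≠ 0 ∧ ∃ R : Submodule K V, S = R.comap (LinearMap.applyₗ x) := by
  have rank_le_one (y : V) : Module.rank K ((tracePerp S).map (LinearMap.applyₗ y)) ≤ 1 := by
    rw [← finrank_eq_rank]
    exact_mod_cast hperp y
  obtain ⟨x, hx, range_le⟩ := exists_range_le_span_singleton_of_rank_map_apply_le_one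
    rank_le_one (one_lt_rank_tracePerp hcodim)
  exact ⟨x, hx, _, eq_comap_iInf_ker_of_range_le_span_singleton hx range_le⟩

/-- Let `S` be a linear subspace of `L(U,V)` with `dim S⊥y ≤ 1` for
every `y ∈ V` (where `S⊥y = {t y : t ∈ S⊥}`) and `codim S > 1`. Then there are a nonzero
vector `x ∈ U` and a linear subspace `R` of `V` such that
`S = {s ∈ L(U,V) : s x ∈ R}`. -/
theorem subspace_eq_comap_of_small_perp_evaluations
    (K U V : Type*) [Field K]
    [AddCommGroup U] [Module K U] [FiniteDimensional K U]
    [AddCommGroup V] [Module K V] [FiniteDimensional K V]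
    (S : Submodule K (U →ₗ[K] V))
    (h1 : ∀ y : V,
      Module.finrank K (Submodule.map (LinearMap.applyₗ y) (tracePerp S)) ≤ 1)
    (h2 : Module.finrank K S + 1 < Module.finrank K (U →ₗ[K] V)) :
    ∃ x : U, x ≠ 0 ∧ ∃ R : Submodule K V,
      S = Submodule.comap (LinearMap.applyₗ x) R := by
  refine subspace_eq_comap_of_small_perp_evaluations_general S h1 ?_
  rw [← finrank_eq_rank, Nat.one_lt_cast, S.finrank_quotient]
  omega
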